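/- arXiv:1201.2335 — 4 statements merged into one kernel-verified Lean document; each statement's English description precedes it below -/
import Mathlib

section
/- Let W be a subspace of V that is invariant under a symplectic transvection T_u[λ] (u ∈ V nonzero, λ ∈ F_ℓ nonzero), i.e. T_u[λ](w) ∈ W for all w ∈ W. Then either u ∈ W or u ∈ W^⊥. -/
open Module LinearMap

theorem mem_invtSubmodule_transvection_iff_forall_smul_mem
    {R V : Type*} [Ring R] [AddCommGroup V] [Module R V]
    {f : Dual R V} {v : V} {W : Submodule R V} :
    W ∈ End.invtSubmodule (transvection f v) ↔ ∀ w ∈ W, f w • v ∈ W := by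
  refine (End.mem_invtSubmodule_iff_forall_mem_of_mem _).trans (forall₂_congr fun w hw ↦ ?_)
  rw [transvection.apply, W.add_mem_iff_right hw]

theorem mem_invtSubmodule_transvection_iff_mem_or_le_ker
    {K V : Type*} [DivisionRing K] [AddCommGroup V] [Module K V]
    {f : Dual K V} {v : V} {W : Submodule K V} :
    W ∈ End.invtSubmodule (transvection f v) ↔ v ∈ W ∨ W ≤ ker f := by
  rw [mem_invtSubmodule_transvection_iff_forall_smul_mem]
  constructor
  · intro hW
    refine or_iff_not_imp_right.mpr fun hWf ↦ ?_
    obtain ⟨w, hw, hfw⟩ := SetLike.not_le_iff_exists.mp hWf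
    exact (W.smul_mem_iff hfw).mp (hW w hw)
  · rintro (hv | hWf) w hw
    · exact W.smul_mem _ hv
    · rw [mem_ker.mp (hWf hw), zero_smul]
      exact W.zero_mem

theorem transvection_invariant_imp_direction_in_or_perp_general
    {K V : Type*} [Field K] [AddCommGroup V] [Module K V]
    (e : V →ₗ[K] V →ₗ[K] K) (u : V) {c : K} (hc : c ≠ 0) (W : Submodule K V)
    (hW : ∀ w ∈ W, w + (c * e w u) • u ∈ W) :
    u ∈ W ∨ ∀ x ∈ W, e x u = 0 := by
  have hT : W ∈ End.invtSubmodule (transvection (c • e.flip u) u) := hW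
  refine (mem_invtSubmodule_transvection_iff_mem_or_le_ker.mp hT).imp_right fun hker x hx ↦ ?_
  have hcx : c * e x u = 0 := hker hx
  exact (mul_eq_zero_iff_left hc).mp hcx

/-- if a subspace `W` is invariant under the symplectic transvection `T_u[c]`
(`u ≠ 0`, `c ≠ 0`), then either `u ∈ W` or `u ∈ W^⊥`. -/
theorem transvection_invariant_imp_direction_in_or_perp
    {ℓ : ℕ} [Fact (Nat.Prime ℓ)] (hℓ : 2 < ℓ)
    {V : Type*} [AddCommGroup V] [Module (ZMod ℓ) V] [FiniteDimensional (ZMod ℓ) V]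
    (e : V →ₗ[ZMod ℓ] V →ₗ[ZMod ℓ] ZMod ℓ)
    (halt : ∀ v : V, e v v = 0)
    (hnondeg : ∀ v : V, (∀ w : V, e v w = 0) → v = 0)
    (u : V) (hu : u ≠ 0) (c : ZMod ℓ) (hc : c ≠ 0)
    (W : Submodule (ZMod ℓ) V)
    (hW : ∀ w ∈ W, w + (c * e w u) • u ∈ W) :
    u ∈ W ∨ (∀ x ∈ W, e x u = 0) :=
  transvection_invariant_imp_direction_in_or_perp_general e u hc W hW
end

section
/- The set L(M) ∩ W spans W; that is, W is generated as an F_ℓ-vector space by the direction vectors of transvections of M which lie in W. In particular L(M) ∩ W is nonempty. -/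
/-- `T` is the symplectic transvection `T_u[c]` with respect to the bilinear form `e`,
i.e. `T v = v + c·e(v,u)·u` for all `v`, with direction vector `u ≠ 0` and parameter `c ≠ 0`. -/
def IsTransvectionWith {k V : Type*} [Field k] [AddCommGroup V] [Module k V]
    (e : V →ₗ[k] V →ₗ[k] k) (T : V ≃ₗ[k] V) (u : V) (c : k) : Prop :=
  u ≠ 0 ∧ c ≠ 0 ∧ ∀ v : V, T v = v + (c * e v u) • u

/-- `T` is a symplectic transvection with respect to the bilinear form `e`. -/
def IsTransvection {k V : Type*} [Field k] [AddCommGroup V] [Module k V]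
    (e : V →ₗ[k] V →ₗ[k] k) (T : V ≃ₗ[k] V) : Prop :=
  ∃ u c, IsTransvectionWith e T u c

/-!
By simplicity of `V`, the `M`-stable set `L(M)` spans `V`, so by nondegeneracy a nonzero `w ∈ W`
pairs nontrivially with some `u ∈ L(M)`. The corresponding transvection moves `w` by a nonzero
multiple of `u` and preserves `W`, whence `u ∈ W`. Then `L(M) ∩ W` spans a nonzero `R`-invariant
subspace of the simple module `W`, which must be all of `W`.
-/

open Set

section Span

variable {k V : Type*} [Semiring k] [AddCommMonoid V] [Module k V]

theorem span_eq_of_forall_invariant_eq_bot_or_eq {G : Set (V ≃ₗ[k] V)} {W : Submodule k V}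
    (hsimple : ∀ U ≤ W, (∀ g ∈ G, ∀ u ∈ U, g u ∈ U) → U = ⊥ ∨ U = W)
    {S : Set V} (hSW : S ⊆ W) (hS : ∀ g ∈ G, MapsTo g S S) {u : V} (hu : u ∈ S) (hu0 : u ≠ 0) :
    Submodule.span k S = W := by
  have span_invariant : ∀ g ∈ G, ∀ v ∈ Submodule.span k S, g v ∈ Submodule.span k S :=
    fun g hg v hv ↦
      (Submodule.map_span_le g.toLinearMap S _).mpr (fun s hs ↦ Submodule.subset_span (hS g hg hs))
        (Submodule.mem_map_of_mem hv)
  have span_ne_bot : Submodule.span k S ≠ ⊥ :=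
    (Submodule.ne_bot_iff _).mpr ⟨u, Submodule.subset_span hu, hu0⟩
  exact (hsimple _ (Submodule.span_le.mpr hSW) span_invariant).resolve_left span_ne_bot

end Span

section Transvections

variable {k V : Type*} [Field k] [AddCommGroup V] [Module k V] {e : V →ₗ[k] V →ₗ[k] k}

/-- `g` is a similitude of the form `e`, i.e. it preserves `e` up to a nonzero scalar; for `e`
symplectic these are the elements of `GSp(V, e)`. -/
def IsSimilitude (e : V →ₗ[k] V →ₗ[k] k) (g : V ≃ₗ[k] V) : Prop :=
  ∃ μ : k, μ ≠ 0 ∧ ∀ x y : V, e (g x) (g y) = μ * e x y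

/-- The set `L(M)` of direction vectors of the transvections contained in `M`. Nonzero multiples
of a direction vector `u` are included, since the factor can be absorbed into the parameter. -/
def transvectionDirections (e : V →ₗ[k] V →ₗ[k] k) (M : Subgroup (V ≃ₗ[k] V)) : Set V :=
  {u | ∃ T ∈ M, ∃ c : k, IsTransvectionWith e T u c}

/-- The subgroup `R` of `M` generated by the transvections contained in `M`. -/
def transvectionSubgroup (e : V →ₗ[k] V →ₗ[k] k) (M : Subgroup (V ≃ₗ[k] V)) :
    Subgroup (V ≃ₗ[k] V) :=
  Subgroup.closure {T | T ∈ M ∧ IsTransvection e T}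

theorem IsTransvectionWith.conj {T g : V ≃ₗ[k] V} {u : V} {c μ : k}
    (hT : IsTransvectionWith e T u c) (hμ : μ ≠ 0)
    (hg : ∀ x y : V, e (g x) (g y) = μ * e x y) :
    IsTransvectionWith e (g * T * g⁻¹) (g u) (c * μ⁻¹) := by
  obtain ⟨hu, hc, hTapply⟩ := hT
  refine ⟨g.map_ne_zero_iff.mpr hu, mul_ne_zero hc (inv_ne_zero hμ), fun v ↦ ?_⟩
  obtain ⟨x, rfl⟩ := g.surjective v
  calc (g * T * g⁻¹) (g x) = g (T x) := congrArg (fun y ↦ g (T y)) (g.symm_apply_apply x)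
    _ = g x + (c * e x u) • g u := by rw [hTapply, map_add, map_smul]
    _ = g x + (c * μ⁻¹ * e (g x) (g u)) • g u := by
      rw [hg, mul_assoc c, inv_mul_cancel_left₀ hμ]

theorem IsTransvectionWith.mem_of_apply_mem {T : V ≃ₗ[k] V} {u w : V} {c : k}
    (hT : IsTransvectionWith e T u c) {W : Submodule k V} (hw : w ∈ W) (hTw : T w ∈ W)
    (hwu : e w u ≠ 0) : u ∈ W := by
  obtain ⟨-, hc, hTapply⟩ := hT
  rw [hTapply, W.add_mem_iff_right hw] at hTw
  exact (W.smul_mem_iff (mul_ne_zero hc hwu)).mp hTw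

variable {M : Subgroup (V ≃ₗ[k] V)}

theorem transvectionSubgroup_le : transvectionSubgroup e M ≤ M :=
  (Subgroup.closure_le M).mpr fun _ hT ↦ hT.1

theorem ne_zero_of_mem_transvectionDirections {u : V} (hu : u ∈ transvectionDirections e M) :
    u ≠ 0 := by
  obtain ⟨T, -, c, hT⟩ := hu
  exact hT.1

theorem mapsTo_transvectionDirections {g : V ≃ₗ[k] V} (hgM : g ∈ M) (hg : IsSimilitude e g) :
    MapsTo g (transvectionDirections e M) (transvectionDirections e M) := by
  rintro u ⟨T, hTM, c, hT⟩
  obtain ⟨μ, hμ, hgμ⟩ := hg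
  exact ⟨g * T * g⁻¹, M.mul_mem (M.mul_mem hgM hTM) (M.inv_mem hgM), c * μ⁻¹, hT.conj hμ hgμ⟩

theorem span_transvectionDirections_eq_top (hM : ∀ g ∈ M, IsSimilitude e g)
    (hTM : ∃ T ∈ M, IsTransvection e T)
    (hVsimple : ∀ U : Submodule k V, (∀ g ∈ M, ∀ u ∈ U, g u ∈ U) → U = ⊥ ∨ U = ⊤) :
    Submodule.span k (transvectionDirections e M) = ⊤ := by
  obtain ⟨T, hTM, u, c, hT⟩ := hTM
  exact span_eq_of_forall_invariant_eq_bot_or_eq (G := M) (fun U _ ↦ hVsimple U)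
    (subset_univ _) (fun g hg ↦ mapsTo_transvectionDirections hg (hM g hg)) ⟨T, hTM, c, hT⟩ hT.1

theorem transvectionDirections_inter_nonempty (hnondeg : ∀ v : V, (∀ w : V, e v w = 0) → v = 0)
    (hspan : Submodule.span k (transvectionDirections e M) = ⊤)
    {W : Submodule k V} (hW0 : W ≠ ⊥)
    (hWinv : ∀ r ∈ transvectionSubgroup e M, ∀ w ∈ W, r w ∈ W) :
    (transvectionDirections e M ∩ W).Nonempty := by
  obtain ⟨w, hw, hw0⟩ := W.exists_mem_ne_zero_of_ne_bot hW0
  obtain ⟨u, ⟨T, hTM, c, hT⟩, hwu⟩ : ∃ u ∈ transvectionDirections e M, e w u ≠ 0 := by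
    by_contra! horth
    have hew : e w = 0 := LinearMap.ext_on hspan horth
    exact hw0 (hnondeg w (LinearMap.congr_fun hew))
  have hTR : T ∈ transvectionSubgroup e M := Subgroup.subset_closure ⟨hTM, u, c, hT⟩
  exact ⟨u, ⟨T, hTM, c, hT⟩, hT.mem_of_apply_mem hw (hWinv T hTR w hw) hwu⟩

theorem directions_in_W_span_W_general (hnondeg : ∀ v : V, (∀ w : V, e v w = 0) → v = 0)
    (hM : ∀ g ∈ M, IsSimilitude e g) (hTM : ∃ T ∈ M, IsTransvection e T)
    (hVsimple : ∀ U : Submodule k V, (∀ g ∈ M, ∀ u ∈ U, g u ∈ U) → U = ⊥ ∨ U = ⊤)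
    {W : Submodule k V} (hW0 : W ≠ ⊥)
    (hWinv : ∀ r ∈ transvectionSubgroup e M, ∀ w ∈ W, r w ∈ W)
    (hWsimple : ∀ U ≤ W, (∀ r ∈ transvectionSubgroup e M, ∀ u ∈ U, r u ∈ U) → U = ⊥ ∨ U = W) :
    Submodule.span k (transvectionDirections e M ∩ W) = W ∧
      (transvectionDirections e M ∩ W).Nonempty := by
  have hspan := span_transvectionDirections_eq_top hM hTM hVsimple
  have hne := transvectionDirections_inter_nonempty hnondeg hspan hW0 hWinv
  refine ⟨?_, hne⟩
  have inter_stable : ∀ r ∈ transvectionSubgroup e M,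
      MapsTo r (transvectionDirections e M ∩ W) (transvectionDirections e M ∩ W) := fun r hr ↦
    have hrM : r ∈ M := transvectionSubgroup_le hr
    (mapsTo_transvectionDirections hrM (hM r hrM)).inter_inter (hWinv r hr)
  obtain ⟨u, hu⟩ := hne
  exact span_eq_of_forall_invariant_eq_bot_or_eq (G := transvectionSubgroup e M) hWsimple
    inter_subset_right inter_stable hu (ne_zero_of_mem_transvectionDirections hu.1)

end Transvections

/-- the set `L(M) ∩ W` of direction vectors of transvections of `M` lying in `W`
is nonempty and spans `W`. -/
theorem directions_in_W_span_W
    {ℓ : ℕ} [Fact (Nat.Prime ℓ)] (hℓ : 2 < ℓ)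
    {V : Type*} [AddCommGroup V] [Module (ZMod ℓ) V] [FiniteDimensional (ZMod ℓ) V]
    (e : V →ₗ[ZMod ℓ] V →ₗ[ZMod ℓ] ZMod ℓ)
    (halt : ∀ v : V, e v v = 0)
    (hnondeg : ∀ v : V, (∀ w : V, e v w = 0) → v = 0)
    -- `M` is a subgroup of `GSp(V, e)` :
    (M : Subgroup (V ≃ₗ[ZMod ℓ] V))
    (hM : ∀ g ∈ M, ∃ μ : ZMod ℓ, μ ≠ 0 ∧ ∀ x y : V, e (g x) (g y) = μ * e x y)
    -- `M` contains a symplectic transvection :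
    (hTM : ∃ T ∈ M, IsTransvection e T)
    -- `V` is a simple `F_ℓ[M]`-module :
    (hVsimple : ∀ U : Submodule (ZMod ℓ) V, (∀ g ∈ M, ∀ u ∈ U, g u ∈ U) → U = ⊥ ∨ U = ⊤)
    -- `R` is the subgroup of `M` generated by the transvections contained in `M` :
    (R : Subgroup (V ≃ₗ[ZMod ℓ] V))
    (hR : R = Subgroup.closure {T : V ≃ₗ[ZMod ℓ] V | T ∈ M ∧ IsTransvection e T})
    -- `W` is a nonzero `R`-invariant subspace which is a simple `F_ℓ[R]`-module :
    (W : Submodule (ZMod ℓ) V) (hW0 : W ≠ ⊥)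
    (hWinv : ∀ r ∈ R, ∀ w ∈ W, r w ∈ W)
    (hWsimple : ∀ U : Submodule (ZMod ℓ) V, U ≤ W → (∀ r ∈ R, ∀ u ∈ U, r u ∈ U) →
      U = ⊥ ∨ U = W) :
    Submodule.span (ZMod ℓ)
        {u : V | (∃ T ∈ M, ∃ c : ZMod ℓ, IsTransvectionWith e T u c) ∧ u ∈ W} = W ∧
      {u : V | (∃ T ∈ M, ∃ c : ZMod ℓ, IsTransvectionWith e T u c) ∧ u ∈ W}.Nonempty := by
  subst hR
  exact directions_in_W_span_W_general hnondeg hM hTM hVsimple hW0 hWinv hWsimple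
end

section
/- Let R_W be the subgroup of M generated by the symplectic transvections contained in M that do not act as the identity on W. Then W is a simple F_ℓ[R_W]-module, i.e. the only R_W-invariant subspaces of W are 0 and W. -/
/-!
A generator that fixes `W` pointwise stabilizes every subset of `W`. Discarding such generators
therefore does not change which subspaces of `W` are invariant.
-/

section

open MulAction
open scoped Pointwise

theorem closure_le_stabilizer_of_closure_diff_fixingSubgroup_le {G X : Type*} [Group G]
    [MulAction G X] {S : Set G} {U W : Set X} (hUW : U ⊆ W)
    (hU : Subgroup.closure (S \ fixingSubgroup G W) ≤ stabilizer G U) :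
    Subgroup.closure S ≤ stabilizer G U := by
  have hfix : fixingSubgroup G W ≤ stabilizer G U :=
    (fixingSubgroup_antitone G X hUW).trans (fixingSubgroup_le_stabilizer G U)
  rw [Subgroup.closure_le]
  intro g hg
  by_cases hgW : g ∈ fixingSubgroup G W
  · exact hfix hgW
  · exact hU (Subgroup.subset_closure ⟨hg, hgW⟩)

variable {k V : Type*} [Semiring k] [AddCommMonoid V] [Module k V]

theorem le_stabilizer_iff_forall_apply_mem (H : Subgroup (V ≃ₗ[k] V)) (U : Submodule k V) :
    H ≤ stabilizer (V ≃ₗ[k] V) (U : Set V) ↔ ∀ g ∈ H, ∀ u ∈ U, g u ∈ U := by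
  simp only [le_stabilizer_iff_smul_le, Set.smul_set_subset_iff, SetLike.mem_coe,
    LinearEquiv.smul_def]

theorem diff_fixingSubgroup_eq_setOf_exists_apply_ne (S : Set (V ≃ₗ[k] V)) (W : Submodule k V) :
    S \ fixingSubgroup (V ≃ₗ[k] V) (W : Set V) = {T ∈ S | ∃ x ∈ W, T x ≠ x} := by
  ext T
  simp [mem_fixingSubgroup_iff]

theorem W_simple_under_RW_general (S : Set (V ≃ₗ[k] V)) (W : Submodule k V)
    (hWsimple : ∀ U : Submodule k V, U ≤ W →
      (∀ r ∈ Subgroup.closure S, ∀ u ∈ U, r u ∈ U) → U = ⊥ ∨ U = W) :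
    ∀ U : Submodule k V, U ≤ W →
      (∀ r ∈ Subgroup.closure {T ∈ S | ∃ x ∈ W, T x ≠ x}, ∀ u ∈ U, r u ∈ U) →
      U = ⊥ ∨ U = W := by
  intro U hUW hU
  rw [← diff_fixingSubgroup_eq_setOf_exists_apply_ne, ← le_stabilizer_iff_forall_apply_mem] at hU
  have hstab : Subgroup.closure S ≤ stabilizer (V ≃ₗ[k] V) (U : Set V) :=
    closure_le_stabilizer_of_closure_diff_fixingSubgroup_le hUW hU
  exact hWsimple U hUW ((le_stabilizer_iff_forall_apply_mem _ U).1 hstab)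

end

/-- `W` is a simple module under the subgroup `R_W` of `M` generated by the
symplectic transvections contained in `M` that do not act as the identity on `W`. -/
theorem W_simple_under_RW
    {ℓ : ℕ} [Fact (Nat.Prime ℓ)] (hℓ : 2 < ℓ)
    {V : Type*} [AddCommGroup V] [Module (ZMod ℓ) V] [FiniteDimensional (ZMod ℓ) V]
    (e : V →ₗ[ZMod ℓ] V →ₗ[ZMod ℓ] ZMod ℓ)
    (halt : ∀ v : V, e v v = 0)
    (hnondeg : ∀ v : V, (∀ w : V, e v w = 0) → v = 0)
    -- `M` is a subgroup of `GSp(V, e)` :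
    (M : Subgroup (V ≃ₗ[ZMod ℓ] V))
    (hM : ∀ g ∈ M, ∃ μ : ZMod ℓ, μ ≠ 0 ∧ ∀ x y : V, e (g x) (g y) = μ * e x y)
    -- `M` contains a symplectic transvection :
    (hTM : ∃ T ∈ M, IsTransvection e T)
    -- `V` is a simple `F_ℓ[M]`-module :
    (hVsimple : ∀ U : Submodule (ZMod ℓ) V, (∀ g ∈ M, ∀ u ∈ U, g u ∈ U) → U = ⊥ ∨ U = ⊤)
    -- `R` is the subgroup of `M` generated by the transvections contained in `M` :
    (R : Subgroup (V ≃ₗ[ZMod ℓ] V))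
    (hR : R = Subgroup.closure {T : V ≃ₗ[ZMod ℓ] V | T ∈ M ∧ IsTransvection e T})
    -- `W` is a nonzero `R`-invariant subspace which is a simple `F_ℓ[R]`-module :
    (W : Submodule (ZMod ℓ) V) (hW0 : W ≠ ⊥)
    (hWinv : ∀ r ∈ R, ∀ w ∈ W, r w ∈ W)
    (hWsimple : ∀ U : Submodule (ZMod ℓ) V, U ≤ W → (∀ r ∈ R, ∀ u ∈ U, r u ∈ U) →
      U = ⊥ ∨ U = W) :
    ∀ U : Submodule (ZMod ℓ) V, U ≤ W →
      (∀ r ∈ Subgroup.closure {T : V ≃ₗ[ZMod ℓ] V | T ∈ M ∧ IsTransvection e T ∧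
          ∃ x ∈ W, T x ≠ x}, ∀ u ∈ U, r u ∈ U) →
      U = ⊥ ∨ U = W := by
  subst hR
  simpa only [Set.mem_ofPred_eq, and_assoc] using W_simple_under_RW_general _ W hWsimple
end

section
/- Let p be a prime, E a finite field of characteristic p with |E| = p^d elements, and Ω an algebraically closed field of characteristic p. Then for every group homomorphism χ : E^× → Ω^× there is exactly one function e from the set Emb(E,Ω) of field embeddings E → Ω to {0, 1, …, p−1} such that e(j) < p−1 for at least one j ∈ Emb(E,Ω) and χ(x) = ∏_{j ∈ Emb(E,Ω)} j(x)^{e(j)} for all x ∈ E^×. -/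
/-!
Fix an embedding `j₀ : E → Ω`. The embeddings of `E` are the Frobenius twists `x ↦ j₀ x ^ p ^ i`
for `i < d`, so `∏ⱼ j x ^ ε j = j₀ x ^ n`, where `n` has the exponents `ε` as base `p` digits. Since
`j₀` identifies the cyclic group `Eˣ` with the `(p ^ d - 1)`-st roots of unity of `Ω`, every
character is `j₀ ^ n` for a unique `n < p ^ d - 1`. The condition that some digit is less than
`p - 1` excludes exactly `n = p ^ d - 1`.
-/

open Function Module Set

theorem bijOn_sum_mul_pow (b d : ℕ) :
    BijOn (fun a : Fin d → ℕ ↦ ∑ i, a i * b ^ (i : ℕ)) {a | ∀ i, a i < b} (Iio (b ^ d)) := by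
  have sum_eq (a : Fin d → Fin b) :
      ∑ i, (a i : ℕ) * b ^ (i : ℕ) = finFunctionFinEquiv a := (finFunctionFinEquiv_apply a).symm
  refine ⟨fun a ha ↦ ?_, fun a ha a' ha' h ↦ ?_, fun n hn ↦ ?_⟩
  · lift a to Fin d → Fin b using ha
    exact (sum_eq a).trans_lt (finFunctionFinEquiv a).is_lt
  · lift a to Fin d → Fin b using ha
    lift a' to Fin d → Fin b using ha'
    simp only [sum_eq, Fin.val_inj, EmbeddingLike.apply_eq_iff_eq] at h
    rw [h]
  · refine ⟨fun i ↦ finFunctionFinEquiv.symm ⟨n, hn⟩ i, fun i ↦ Fin.is_lt _, ?_⟩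
    exact (sum_eq _).trans (by rw [Equiv.apply_symm_apply])

theorem sum_sub_one_mul_pow {b : ℕ} (hb : 0 < b) (d : ℕ) :
    ∑ i : Fin d, (b - 1) * b ^ (i : ℕ) = b ^ d - 1 := by
  rw [Fin.sum_univ_eq_sum_range (fun i ↦ (b - 1) * b ^ i), ← Finset.mul_sum, mul_comm,
    geom_sum_mul_of_one_le hb]

theorem bijOn_sum_mul_pow_of_exists_lt {b : ℕ} (hb : 0 < b) (d : ℕ) :
    BijOn (fun a : Fin d → ℕ ↦ ∑ i, a i * b ^ (i : ℕ))
      {a | (∀ i, a i ≤ b - 1) ∧ ∃ i, a i < b - 1} (Iio (b ^ d - 1)) := by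
  have top_mem : (fun _ ↦ b - 1) ∈ {a : Fin d → ℕ | ∀ i, a i < b} := fun _ ↦ by lia
  convert (bijOn_sum_mul_pow b d).sdiff_singleton top_mem using 1
  · ext a
    simp only [mem_sdiff, mem_ofPred_eq, mem_singleton_iff, funext_iff]
    grind
  · ext n
    simp only [mem_sdiff, mem_Iio, mem_singleton_iff, sum_sub_one_mul_pow hb]
    lia

theorem existsUnique_pow_eq_of_injective {G R : Type*} [CommGroup G] [Finite G] [CommRing R]
    [IsDomain R] {f : G →* R} (hf : Injective f) (χ : G →* R) :
    ∃! n, n < Nat.card G ∧ f ^ n = χ := by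
  have : IsCyclic G := isCyclic_of_injective_ringHom f hf
  obtain ⟨g, hg⟩ := IsCyclic.exists_generator (α := G)
  have primitive : IsPrimitiveRoot (f g) (Nat.card G) := by
    rw [← orderOf_eq_card_of_forall_mem_zpowers hg]
    exact (IsPrimitiveRoot.orderOf g).map_of_injective hf
  have : NeZero (Nat.card G) := ⟨Nat.card_pos.ne'⟩
  obtain ⟨n, hn, hgn⟩ := primitive.eq_pow_of_pow_eq_one (ξ := χ g) (by
    rw [← map_pow, pow_card_eq_one', map_one])
  refine ⟨n, ⟨hn, MonoidHom.ext fun x ↦ ?_⟩, fun m ⟨hm, hχ⟩ ↦ primitive.pow_inj hm hn ?_⟩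
  · obtain ⟨k, rfl⟩ := mem_powers_iff_mem_zpowers.mpr (hg x)
    simp only [map_pow, MonoidHom.pow_apply, hgn]
  · rw [hgn, ← hχ, MonoidHom.pow_apply]

section FrobeniusTwist

variable {K E Ω : Type*} [Field K] [Fintype K] [Field E] [Finite E] [Algebra K E]
  [CommRing Ω] [IsDomain Ω] [Algebra K Ω]

theorem bijective_comp_frobeniusAlgHom_pow (j₀ : E →ₐ[K] Ω) :
    Bijective fun i : Fin (finrank K E) ↦ j₀.comp (FiniteField.frobeniusAlgHom K E ^ (i : ℕ)) := by
  have comp_injective : Injective (j₀.comp : (E →ₐ[K] E) → (E →ₐ[K] Ω)) := fun _ _ h ↦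
    AlgHom.ext fun x ↦ j₀.toRingHom.injective (DFunLike.congr_fun h x)
  refine (comp_injective.comp
    (FiniteField.bijective_frobeniusAlgHom_pow K E).injective).bijective_of_nat_card_le ?_
  simpa only [Nat.card_fin] using card_algHom_le_finrank K E Ω

/-- The enumeration of the `K`-embeddings of `E` by the twists `j₀ ∘ Frobⁱ` of a fixed one, where
`Frob x = x ^ #K` and `i < [E : K]`. -/
noncomputable def frobeniusTwistEquiv (j₀ : E →ₐ[K] Ω) : Fin (finrank K E) ≃ (E →ₐ[K] Ω) :=
  .ofBijective _ (bijective_comp_frobeniusAlgHom_pow j₀)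

theorem frobeniusTwistEquiv_apply (j₀ : E →ₐ[K] Ω) (i : Fin (finrank K E)) (x : E) :
    frobeniusTwistEquiv j₀ i x = j₀ x ^ Fintype.card K ^ (i : ℕ) := by
  simp [frobeniusTwistEquiv, FiniteField.coe_frobeniusAlgHom, pow_iterate]

theorem finprod_algHom_pow (j₀ : E →ₐ[K] Ω) (ε : (E →ₐ[K] Ω) → ℕ) (x : E) :
    ∏ᶠ j, j x ^ ε j = j₀ x ^ ∑ i, ε (frobeniusTwistEquiv j₀ i) * Fintype.card K ^ (i : ℕ) := by
  calc ∏ᶠ j, j x ^ ε j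
    _ = ∏ i, frobeniusTwistEquiv j₀ i x ^ ε (frobeniusTwistEquiv j₀ i) := by
      rw [← finprod_comp_equiv (frobeniusTwistEquiv j₀), finprod_eq_prod_of_fintype]
    _ = ∏ i, j₀ x ^ (ε (frobeniusTwistEquiv j₀ i) * Fintype.card K ^ (i : ℕ)) := by
      simp only [frobeniusTwistEquiv_apply, ← pow_mul, mul_comm]
    _ = _ := Finset.prod_pow_eq_pow_sum ..

theorem existsUnique_eq_finprod_algHom_pow [Nonempty (E →ₐ[K] Ω)] (χ : Eˣ →* Ω) :
    ∃! ε : (E →ₐ[K] Ω) → ℕ,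
      (∀ j, ε j ≤ Fintype.card K - 1) ∧ (∃ j, ε j < Fintype.card K - 1) ∧
        ∀ x : Eˣ, χ x = ∏ᶠ j : E →ₐ[K] Ω, j x ^ ε j := by
  obtain ⟨j₀⟩ := ‹Nonempty (E →ₐ[K] Ω)›
  let f : Eˣ →* Ω := (j₀ : E →* Ω).comp (Units.coeHom E)
  have hf : Injective f := j₀.toRingHom.injective.comp Units.val_injective
  have card_units : Nat.card Eˣ = Fintype.card K ^ finrank K E - 1 := by
    rw [Nat.card_units, Module.natCard_eq_pow_finrank (K := K), Nat.card_eq_fintype_card]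
  have expansion_iff (ε : (E →ₐ[K] Ω) → ℕ) : (∀ x : Eˣ, χ x = ∏ᶠ j : E →ₐ[K] Ω, j x ^ ε j) ↔
      f ^ (∑ i, ε (frobeniusTwistEquiv j₀ i) * Fintype.card K ^ (i : ℕ)) = χ := by
    simp only [finprod_algHom_pow j₀, MonoidHom.ext_iff, eq_comm (a := χ _)]
    rfl
  have digits := bijOn_sum_mul_pow_of_exists_lt (Fintype.card_pos (α := K)) (finrank K E)
  obtain ⟨n, ⟨hn, hχ⟩, n_unique⟩ := existsUnique_pow_eq_of_injective hf χ
  rw [card_units] at hn n_unique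
  obtain ⟨a, ⟨a_le, i, hi⟩, rfl⟩ := digits.surjOn hn
  refine ⟨a ∘ (frobeniusTwistEquiv j₀).symm, ⟨fun j ↦ a_le _,
    ⟨frobeniusTwistEquiv j₀ i, by simpa⟩, (expansion_iff _).mpr (by simpa using hχ)⟩, ?_⟩
  rintro ε ⟨ε_le, ⟨j, hj⟩, hε⟩
  have mem_digits : ε ∘ frobeniusTwistEquiv j₀ ∈ {a : Fin (finrank K E) → ℕ |
      (∀ i, a i ≤ Fintype.card K - 1) ∧ ∃ i, a i < Fintype.card K - 1} :=
    ⟨fun i ↦ ε_le _, (frobeniusTwistEquiv j₀).symm j, by simpa⟩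
  rw [Equiv.eq_comp_symm]
  exact digits.injOn mem_digits ⟨a_le, i, hi⟩
    (n_unique _ ⟨digits.mapsTo mem_digits, (expansion_iff ε).mp hε⟩)

end FrobeniusTwist

/-- Ring homomorphisms are the same as `ZMod n`-algebra homomorphisms; for `n` prime, every
embedding of fields of characteristic `n` is an embedding over the prime field. -/
def ringHomEquivZModAlgHom (n : ℕ) (R S : Type*) [Semiring R] [Semiring S] [Algebra (ZMod n) R]
    [Algebra (ZMod n) S] : (R →+* S) ≃ (R →ₐ[ZMod n] S) where
  toFun f :=
    { f with
      commutes' := DFunLike.congr_fun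
        (Subsingleton.elim (f.comp (algebraMap (ZMod n) R)) (algebraMap (ZMod n) S)) }
  invFun := AlgHom.toRingHom

theorem nonempty_ringHom_of_isAlgClosed (p : ℕ) (E Ω : Type*) [Field E] [Finite E] [CharP E p]
    [Field Ω] [IsAlgClosed Ω] [CharP Ω p] : Nonempty (E →+* Ω) := by
  have : Fact p.Prime := ⟨CharP.char_is_prime E p⟩
  let := ZMod.algebra E p
  let := ZMod.algebra Ω p
  exact ⟨(IsAlgClosed.lift : E →ₐ[ZMod p] Ω)⟩

theorem character_of_finite_field_unique_expansion_general (p : ℕ) {E Ω : Type*} [Field E]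
    [Finite E] [CharP E p] [CommRing Ω] [IsDomain Ω] [Nonempty (E →+* Ω)] (χ : Eˣ →* Ωˣ) :
    ∃! ε : (E →+* Ω) → ℕ,
      (∀ j, ε j ≤ p - 1) ∧ (∃ j, ε j < p - 1) ∧
        ∀ x : Eˣ, (χ x : Ω) = ∏ᶠ j : E →+* Ω, j x ^ ε j := by
  obtain ⟨j₀⟩ := ‹Nonempty (E →+* Ω)›
  have : Fact p.Prime := ⟨CharP.char_is_prime E p⟩
  have : CharP Ω p := charP_of_injective_ringHom j₀.injective p
  let := ZMod.algebra E p
  let := ZMod.algebra Ω p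
  let toAlgHom := ringHomEquivZModAlgHom p E Ω
  have : Nonempty (E →ₐ[ZMod p] Ω) := ⟨toAlgHom j₀⟩
  have key := existsUnique_eq_finprod_algHom_pow (K := ZMod p) ((Units.coeHom Ω).comp χ)
  rw [ZMod.card] at key
  refine ((toAlgHom.arrowCongr (.refl ℕ)).existsUnique_congr' fun ε ↦ ?_).mpr key
  have expansion_congr (x : E) : ∏ᶠ j : E →+* Ω, j x ^ ε (toAlgHom j) = ∏ᶠ j, j x ^ ε j :=
    finprod_comp_equiv toAlgHom (f := fun j ↦ j x ^ ε j)
  exact and_congr (toAlgHom.forall_congr_left.trans (by simp)) <|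
    and_congr (toAlgHom.exists_congr_left.trans (by simp)) <| by simp [expansion_congr]

/-- let `E` be a finite field with `p^d` elements and `Ω` an algebraically
closed field of characteristic `p`. Every group homomorphism `χ : Eˣ → Ωˣ` can be written
uniquely as `χ(x) = ∏_{j ∈ Emb(E,Ω)} j(x)^{e(j)}` with exponents `e(j) ∈ {0, …, p−1}` such
that `e(j) < p−1` for at least one embedding `j`. -/
theorem character_of_finite_field_unique_expansion
    (p : ℕ)(hp : p.Prime) (E : Type*) [Field E] [Fintype E] [CharP E p]
    (d : ℕ) (hcard : Fintype.card E = p ^ d)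
    (Ω : Type*) [Field Ω] [IsAlgClosed Ω] [CharP Ω p]
    (χ : Eˣ →* Ωˣ) :
    ∃! ε : (E →+* Ω) → ℕ,
      (∀ j : E →+* Ω, ε j ≤ p - 1) ∧
      (∃ j : E →+* Ω, ε j < p - 1) ∧
      (∀ x : Eˣ, (χ x : Ω) = ∏ᶠ j : E →+* Ω, (j (x : E)) ^ ε j) := by
  have : Nonempty (E →+* Ω) := nonempty_ringHom_of_isAlgClosed p E Ω
  exact character_of_finite_field_unique_expansion_general p χ
end
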